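/- Let P be a finite poset and r \ge 2 an integer, and let P_r = P \times Q_{r-1} with the product order, where Q_{r-1} = {1, ..., r-1} is a chain. Then for all x \in P and 1 \le i \le r-1: height_{\hat{P_r}}((x,i)) = height_{\hat{P}}(x) + i - 1 and depth_{\hat{P_r}}((x,i)) = depth_{\hat{P}}(x) + (r - i - 1); in particular rank \hat{P_r} = rank \hat{P} + (r - 2). Consequently, height(x) + depth(x) = rank \hat{P} for all x \in P if and only if height((x,i)) + depth((x,i)) = rank \hat{P_r} for all (x,i) \in P_r; that is, the generalized Hibi ring R_r(P) is pseudo-Gorenstein if and only if the Hibi ring R[I(P)] is pseudo-Gorenstein. -/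

import Mathlib

open Classical

/-- `Hat P` is the poset `P` with a new least element `-∞ = ⊥` and a new
greatest element `∞ = ⊤` adjoined. -/
abbrev Hat (P : Type*) := WithBot (WithTop P)

/-- The canonical inclusion of `P` into `Hat P`. -/
def toHat {P : Type*} (x : P) : Hat P := ((x : WithTop P) : WithBot (WithTop P))

/-- The rank of a poset: the maximal length (number of covering steps) of a
chain, encoded as the maximal `n` admitting a strictly increasing sequence of
`n + 1` elements. -/
noncomputable def rankN (Q : Type*) [Preorder Q] : ℕ :=
  sSup {n : ℕ | ∃ f : Fin (n + 1) → Q, StrictMono f}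

/-- The height of `x` in a poset `Q`: the rank of the subposet `{y | y ≤ x}`. -/
noncomputable def heightN {Q : Type*} [Preorder Q] (x : Q) : ℕ :=
  sSup {n : ℕ | ∃ f : Fin (n + 1) → Q, StrictMono f ∧ ∀ i, f i ≤ x}

/-- The depth of `x` in a poset `Q`: the rank of the subposet `{y | x ≤ y}`. -/
noncomputable def depthN {Q : Type*} [Preorder Q] (x : Q) : ℕ :=
  sSup {n : ℕ | ∃ f : Fin (n + 1) → Q, StrictMono f ∧ ∀ i, x ≤ f i}

/-- `v` belongs to `S(P)`: `v : Hat P → ℕ` is order-reversing with `v ∞ = 0`. -/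
def memS (P : Type*) [PartialOrder P] (v : Hat P → ℕ) : Prop :=
  v ⊤ = 0 ∧ ∀ p q : Hat P, p ≤ q → v q ≤ v p

/-- `v` belongs to `T(P)`: `v : Hat P → ℕ` is strictly order-reversing with
`v ∞ = 0`. -/
def memT (P : Type*) [PartialOrder P] (v : Hat P → ℕ) : Prop :=
  v ⊤ = 0 ∧ ∀ p q : Hat P, p < q → v q < v p

/-- The partial order of `T(P)`: `v ≥ w` iff `v` dominates `w` pointwise and the
pointwise difference `v - w` is order-reversing. -/
def Tge (P : Type*) [PartialOrder P] (v w : Hat P → ℕ) : Prop :=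
  (∀ p : Hat P, w p ≤ v p) ∧ ∀ p q : Hat P, p ≤ q → v q - w q ≤ v p - w p

/-- `v` is a minimal element of the poset `T(P)`. -/
def IsMinT (P : Type*) [PartialOrder P] (v : Hat P → ℕ) : Prop :=
  memT P v ∧ ∀ w : Hat P → ℕ, memT P w → Tge P v w → w = v

/-- A poset is pure if all its maximal chains have the same length, equivalently
the same cardinality. -/
def IsPure (P : Type*) [PartialOrder P] : Prop :=
  ∀ C D : Set P, IsMaxChain (· ≤ ·) C → IsMaxChain (· ≤ ·) D → C.ncard = D.ncard

theorem Fin.add_sub_le_of_strictMono {n : ℕ} {f : Fin (n + 1) → ℕ} (hf : StrictMono f)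
    {i j : Fin (n + 1)} (hij : i ≤ j) : f i + ((j : ℕ) - i) ≤ f j := by
  induction j using Fin.induction with
  | zero =>
    obtain rfl : i = 0 := Fin.le_zero_iff.mp hij
    simp
  | succ j ih =>
    rcases hij.eq_or_lt with rfl | hlt
    · simp
    · have h := ih (Fin.le_castSucc_iff.mpr hlt)
      have hs : f j.castSucc < f j.succ := hf Fin.castSucc_lt_succ
      have hi : (i : ℕ) ≤ j := Fin.le_castSucc_iff.mpr hlt
      simp only [Fin.val_castSucc, Fin.val_succ] at *
      omega

theorem Fin.add_sub_le_of_strictAnti {n : ℕ} {f : Fin (n + 1) → ℕ} (hf : StrictAnti f)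
    {i j : Fin (n + 1)} (hij : i ≤ j) : f j + ((j : ℕ) - i) ≤ f i := by
  have h := Fin.add_sub_le_of_strictMono (hf.comp Fin.rev_strictAnti) (Fin.rev_le_rev.mpr hij)
  simp only [Function.comp_apply, Fin.rev_rev, Fin.val_rev] at h
  have := j.isLt
  omega

theorem Fin.snoc_strictMono {α : Type*} [Preorder α] {n : ℕ} {f : Fin n → α} {a : α}
    (hf : StrictMono f) (ha : ∀ i, f i < a) : StrictMono (Fin.snoc (α := fun _ => α) f a) := by
  intro i j hij
  obtain ⟨i, rfl⟩ := Fin.exists_castSucc_eq.mpr (hij.trans_le (Fin.le_last _)).ne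
  induction j using Fin.lastCases with
  | last => simpa using ha i
  | cast j => simpa using hf (Fin.castSucc_lt_castSucc_iff.mp hij)

section HeightDepth

variable {Q : Type*}

theorem heightN_le_of_strictMono [PartialOrder Q] {g : Q → ℕ} (hg : StrictMono g) (x : Q) :
    heightN x ≤ g x := by
  refine csSup_le' ?_
  rintro n ⟨f, hf, hfx⟩
  have h := Fin.add_sub_le_of_strictMono (hg.comp hf) (Fin.zero_le (Fin.last n))
  have h' := hg.monotone (hfx (Fin.last n))
  simp only [Function.comp_apply, Fin.val_last, Fin.val_zero] at h
  omega

theorem heightN_strictMono [PartialOrder Q] [Finite Q] : StrictMono (heightN : Q → ℕ) := by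
  have hbdd (x : Q) : BddAbove {n : ℕ | ∃ f : Fin (n + 1) → Q, StrictMono f ∧ ∀ i, f i ≤ x} := by
    refine ⟨Nat.card Q, ?_⟩
    rintro n ⟨f, hf, -⟩
    have h := Nat.card_le_card_of_injective f hf.injective
    rw [Nat.card_fin] at h
    omega
  intro x y hxy
  obtain ⟨f, hf, hfx⟩ : ∃ f : Fin (heightN x + 1) → Q, StrictMono f ∧ ∀ i, f i ≤ x :=
    Nat.sSup_mem
    (⟨0, fun _ => x, Subsingleton.strictMono (α := Fin 1) _, fun _ => le_rfl⟩ :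
      {n : ℕ | ∃ f : Fin (n + 1) → Q, StrictMono f ∧ ∀ i, f i ≤ x}.Nonempty) (hbdd x)
  refine Nat.lt_of_succ_le (le_csSup (hbdd y)
    ⟨Fin.snoc (α := fun _ => Q) f y, Fin.snoc_strictMono hf fun i => (hfx i).trans_lt hxy, ?_⟩)
  exact Fin.lastCases (by rw [Fin.snoc_last]) fun i => by
    rw [Fin.snoc_castSucc]
    exact (hfx i).trans hxy.le

theorem heightN_toDual [Preorder Q] (x : Q) : heightN (OrderDual.toDual x) = depthN x := by
  unfold heightN depthN
  congr 1
  ext n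
  constructor
  · rintro ⟨f, hf, hfx⟩
    exact ⟨fun i => OrderDual.ofDual (f i.rev), fun i j hij => hf (Fin.rev_lt_rev.mpr hij),
      fun i => hfx i.rev⟩
  · rintro ⟨f, hf, hfx⟩
    exact ⟨fun i => OrderDual.toDual (f i.rev), fun i j hij => hf (Fin.rev_lt_rev.mpr hij),
      fun i => hfx i.rev⟩

theorem depthN_le_of_strictAnti [PartialOrder Q] {g : Q → ℕ} (hg : StrictAnti g) (x : Q) :
    depthN x ≤ g x := by
  rw [← heightN_toDual]
  exact heightN_le_of_strictMono (g := g ∘ OrderDual.ofDual) (fun _ _ h => hg h) _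

theorem depthN_strictAnti [PartialOrder Q] [Finite Q] : StrictAnti (depthN : Q → ℕ) := by
  intro x y hxy
  rw [← heightN_toDual, ← heightN_toDual]
  exact heightN_strictMono (OrderDual.toDual_lt_toDual.mpr hxy)

theorem heightN_top [Preorder Q] [OrderTop Q] : heightN (⊤ : Q) = rankN Q := by
  simp [heightN, rankN]

end HeightDepth

section Hat

variable {P β : Type*}

/-- The map on `Hat P` sending `⊥` to `b`, `⊤` to `t`, and extending `g` on `P`. -/
def Hat.extend (b t : β) (g : P → β) : Hat P → β :=
  WithBot.recBotCoe b (WithTop.recTopCoe t g)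

@[simp]
theorem Hat.extend_toHat (b t : β) (g : P → β) (x : P) : Hat.extend b t g (toHat x) = g x := rfl

@[simp]
theorem Hat.extend_top (b t : β) (g : P → β) : Hat.extend b t g ⊤ = t := rfl

theorem toHat_strictMono [Preorder P] : StrictMono (toHat : P → Hat P) :=
  WithBot.coe_strictMono.comp WithTop.coe_strictMono

theorem bot_lt_toHat [Preorder P] (x : P) : (⊥ : Hat P) < toHat x := WithBot.bot_lt_coe _

theorem toHat_lt_top [Preorder P] (x : P) : toHat x < (⊤ : Hat P) :=
  WithBot.coe_lt_coe.mpr (WithTop.coe_lt_top x)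

theorem Hat.extend_strictMono [Preorder P] [Preorder β] {b t : β} {g : P → β} (hg : StrictMono g)
    (hb : ∀ x, b < g x) (ht : ∀ x, g x < t) (hbt : b < t) : StrictMono (Hat.extend b t g) := by
  intro p q hpq
  induction p using WithBot.recBotCoe with
  | bot =>
    induction q using WithBot.recBotCoe with
    | bot => exact absurd hpq (lt_irrefl _)
    | coe q =>
      induction q using WithTop.recTopCoe with
      | top => exact hbt
      | coe q => exact hb q
  | coe p =>
    induction q using WithBot.recBotCoe with
    | bot => exact absurd hpq not_lt_bot
    | coe q =>
      have hpq := WithBot.coe_lt_coe.mp hpq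
      induction p using WithTop.recTopCoe with
      | top => exact absurd hpq not_top_lt
      | coe p =>
        induction q using WithTop.recTopCoe with
        | top => exact ht p
        | coe q => exact hg (WithTop.coe_lt_coe.mp hpq)

theorem Hat.extend_strictAnti [Preorder P] [Preorder β] {b t : β} {g : P → β} (hg : StrictAnti g)
    (hb : ∀ x, g x < b) (ht : ∀ x, t < g x) (hbt : t < b) : StrictAnti (Hat.extend b t g) :=
  Hat.extend_strictMono (β := βᵒᵈ) hg hb ht hbt

instance [Finite P] : Finite (Hat P) := inferInstanceAs (Finite (Option (Option P)))

end Hat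

section ProdChain

variable {P : Type*} [PartialOrder P] [Finite P] {m : ℕ}

theorem heightN_extend_prod_strictMono [Nonempty P] : StrictMono
    (Hat.extend 0 (heightN (⊤ : Hat P) + m)
      fun z : P × Fin (m + 1) => heightN (toHat z.1) + (z.2 : ℕ)) := by
  refine Hat.extend_strictMono ?_ ?_ ?_ ?_
  · rintro ⟨x, i⟩ ⟨y, j⟩ h
    rcases Prod.mk_lt_mk.mp h with ⟨hx, hi⟩ | ⟨hx, hi⟩
    · exact add_lt_add_of_lt_of_le (heightN_strictMono (toHat_strictMono hx)) hi
    · exact add_lt_add_of_le_of_lt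
        (heightN_strictMono.monotone (toHat_strictMono.monotone hx)) hi
  · rintro ⟨x, i⟩
    have := heightN_strictMono (bot_lt_toHat x)
    simp only
    omega
  · rintro ⟨x, i⟩
    have := heightN_strictMono (toHat_lt_top x)
    have := i.isLt
    simp only
    omega
  · have := heightN_strictMono (bot_lt_top (α := Hat P))
    omega

theorem heightN_toHat_zero_add_le (x : P) (i : Fin (m + 1)) :
    heightN (toHat ((x, 0) : P × Fin (m + 1))) + (i : ℕ) ≤
      heightN (toHat ((x, i) : P × Fin (m + 1))) := by
  have hmono : StrictMono fun i : Fin (m + 1) => heightN (toHat ((x, i) : P × Fin (m + 1))) :=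
    fun i j h => heightN_strictMono (toHat_strictMono (Prod.mk_lt_mk_iff_right.mpr h))
  simpa using Fin.add_sub_le_of_strictMono hmono (Fin.zero_le i)

theorem heightN_toHat_zero_add_lt_top (x : P) :
    heightN (toHat ((x, 0) : P × Fin (m + 1))) + m < heightN (⊤ : Hat (P × Fin (m + 1))) :=
  (heightN_toHat_zero_add_le x (Fin.last m)).trans_lt (heightN_strictMono (toHat_lt_top _))

theorem heightN_extend_strictMono [Nonempty P] : StrictMono
    (Hat.extend 0 (heightN (⊤ : Hat (P × Fin (m + 1))) - m)
      fun x : P => heightN (toHat ((x, 0) : P × Fin (m + 1)))) := by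
  refine Hat.extend_strictMono ?_ ?_ ?_ ?_
  · exact fun x y h => heightN_strictMono (toHat_strictMono (Prod.mk_lt_mk_iff_left.mpr h))
  · exact fun x => (Nat.zero_le _).trans_lt (heightN_strictMono (bot_lt_toHat _))
  · intro x
    have := heightN_toHat_zero_add_lt_top (m := m) x
    omega
  · have := heightN_toHat_zero_add_lt_top (m := m) (Classical.arbitrary P)
    omega

theorem heightN_toHat_prod (x : P) (i : Fin (m + 1)) :
    heightN (toHat ((x, i) : P × Fin (m + 1))) = heightN (toHat x) + (i : ℕ) := by
  have : Nonempty P := ⟨x⟩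
  have hle := heightN_le_of_strictMono heightN_extend_prod_strictMono (toHat (x, i))
  have h := heightN_le_of_strictMono (heightN_extend_strictMono (m := m)) (toHat x)
  rw [Hat.extend_toHat] at hle h
  refine le_antisymm hle ?_
  exact (Nat.add_le_add_right h _).trans (heightN_toHat_zero_add_le x i)

theorem rankN_hat_prod [Nonempty P] : rankN (Hat (P × Fin (m + 1))) = rankN (Hat P) + m := by
  rw [← heightN_top, ← heightN_top]
  have hle := heightN_le_of_strictMono (heightN_extend_prod_strictMono (P := P) (m := m)) ⊤
  have h := heightN_le_of_strictMono (heightN_extend_strictMono (P := P) (m := m)) ⊤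
  rw [Hat.extend_top] at hle h
  have := heightN_toHat_zero_add_lt_top (m := m) (Classical.arbitrary P)
  omega

theorem depthN_extend_prod_strictAnti : StrictAnti
    (Hat.extend (depthN (⊥ : Hat P) + m) 0
      fun z : P × Fin (m + 1) => depthN (toHat z.1) + (m - (z.2 : ℕ))) := by
  refine Hat.extend_strictAnti ?_ ?_ ?_ ?_
  · rintro ⟨x, i⟩ ⟨y, j⟩ h
    have hj := j.isLt
    rcases Prod.mk_lt_mk.mp h with ⟨hx, hi⟩ | ⟨hx, hi⟩
    · have := depthN_strictAnti (toHat_strictMono hx)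
      have hi : (i : ℕ) ≤ j := hi
      simp only
      omega
    · have := depthN_strictAnti.antitone (toHat_strictMono.monotone hx)
      have hi : (i : ℕ) < j := hi
      simp only
      omega
  · rintro ⟨x, i⟩
    have := depthN_strictAnti (bot_lt_toHat x)
    simp only
    omega
  · rintro ⟨x, i⟩
    have := depthN_strictAnti (toHat_lt_top x)
    simp only
    omega
  · have := depthN_strictAnti (bot_lt_top (α := Hat P))
    omega

theorem depthN_toHat_last_add_le (x : P) (i : Fin (m + 1)) :
    depthN (toHat ((x, Fin.last m) : P × Fin (m + 1))) + (m - (i : ℕ)) ≤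
      depthN (toHat ((x, i) : P × Fin (m + 1))) := by
  have hanti : StrictAnti fun i : Fin (m + 1) => depthN (toHat ((x, i) : P × Fin (m + 1))) :=
    fun i j h => depthN_strictAnti (toHat_strictMono (Prod.mk_lt_mk_iff_right.mpr h))
  simpa using Fin.add_sub_le_of_strictAnti hanti (Fin.le_last i)

theorem depthN_extend_strictAnti : StrictAnti
    (Hat.extend (depthN (⊥ : Hat (P × Fin (m + 1)))) 0
      fun x : P => depthN (toHat ((x, Fin.last m) : P × Fin (m + 1)))) :=
  Hat.extend_strictAnti
    (fun _ _ h => depthN_strictAnti (toHat_strictMono (Prod.mk_lt_mk_iff_left.mpr h)))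
    (fun _ => depthN_strictAnti (bot_lt_toHat _))
    (fun _ => (Nat.zero_le _).trans_lt (depthN_strictAnti (toHat_lt_top _)))
    ((Nat.zero_le _).trans_lt (depthN_strictAnti (bot_lt_top (α := Hat (P × Fin (m + 1))))))

theorem depthN_toHat_prod (x : P) (i : Fin (m + 1)) :
    depthN (toHat ((x, i) : P × Fin (m + 1))) = depthN (toHat x) + (m - (i : ℕ)) := by
  have hle := depthN_le_of_strictAnti depthN_extend_prod_strictAnti (toHat (x, i))
  have h := depthN_le_of_strictAnti (depthN_extend_strictAnti (m := m)) (toHat x)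
  rw [Hat.extend_toHat] at hle h
  refine le_antisymm hle ?_
  exact (Nat.add_le_add_right h _).trans (depthN_toHat_last_add_le x i)

end ProdChain

/-- Heights and depths in `Hat (P × Q_{r-1})`, where `Q_{r-1}` is realized as
`Fin (r-1)` (so the 0-based index `i` corresponds to the paper's `i + 1`):
`height((x,i)) = height(x) + i`, `depth((x,i)) = depth(x) + (r - 2 - i)`, hence
`rank (Hat (P × Q_{r-1})) = rank (Hat P) + (r - 2)`; consequently the Hibi ring
of `I(P × Q_{r-1})` (the generalized Hibi ring `R_r(P)`) is pseudo-Gorenstein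
iff the Hibi ring of `I(P)` is. -/
theorem height_depth_prod_chain (P : Type*) [Fintype P] [PartialOrder P]
    [Nonempty P] (r : ℕ) (hr : 2 ≤ r) :
    (∀ (x : P) (i : Fin (r - 1)),
        heightN (toHat ((x, i) : P × Fin (r - 1))) = heightN (toHat x) + (i : ℕ) ∧
        depthN (toHat ((x, i) : P × Fin (r - 1))) =
          depthN (toHat x) + (r - 2 - (i : ℕ))) ∧
      rankN (Hat (P × Fin (r - 1))) = rankN (Hat P) + (r - 2) ∧
      ((∀ x : P, heightN (toHat x) + depthN (toHat x) = rankN (Hat P)) ↔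
        ∀ z : P × Fin (r - 1),
          heightN (toHat z) + depthN (toHat z) = rankN (Hat (P × Fin (r - 1)))) := by
  obtain ⟨m, rfl⟩ := Nat.exists_eq_add_of_le' hr
  have hh : ∀ (x : P) (i : Fin (m + 2 - 1)), _ := fun x i => heightN_toHat_prod (m := m) x i
  have hd : ∀ (x : P) (i : Fin (m + 2 - 1)), _ := fun x i => depthN_toHat_prod (m := m) x i
  have hrank : rankN (Hat (P × Fin (m + 2 - 1))) = rankN (Hat P) + m := rankN_hat_prod
  refine ⟨fun x i => ⟨hh x i, hd x i⟩, hrank, fun h => ?_, fun h x => ?_⟩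
  · rintro ⟨x, i⟩
    rw [hh x i, hd x i, hrank, ← h x]
    have : (i : ℕ) < m + 1 := i.isLt
    omega
  · have h0 : Fin (m + 2 - 1) := (0 : Fin (m + 1))
    have hx := h (x, h0)
    rw [hh x h0, hd x h0, hrank] at hx
    have : (h0 : ℕ) < m + 1 := h0.isLt
    omega
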